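/- Let (X,F,μ) be a probability space, T: X → X an ergodic measure-preserving transformation, and {f_n} a sequence of non-negative measurable functions with sup_x f_1(x) < ∞ and f_{n+m}(x) ≤ f_m(x) f_n(T^m x) for all n, m, x. If α = lim_n (1/n)∫ log f_n dμ = −∞, then for every ε > 0, every N > 0 and μ-a.e. x there exists n_0(x) such that log f_n(T^m x) ≤ −Nn + (n+m)ε for all n ≥ n_0(x) and all m ∈ ℕ. -/

import Mathlib

open MeasureTheory Filter
open scoped ENNReal

/-- `log` with the convention `log x = -∞` for `x ≤ 0`. -/
noncomputable def elog (x : ℝ) : EReal := ENNReal.log (ENNReal.ofReal x)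

/-- The positive part of an extended real, as an extended nonnegative real. -/
noncomputable def epos (e : EReal) : ℝ≥0∞ := if e = ⊤ then ⊤ else ENNReal.ofReal e.toReal

/-- Integral of an `EReal`-valued function (difference of the integrals of the positive
and negative parts), allowing the value `-∞`. -/
noncomputable def eintegral {X : Type*} [MeasurableSpace X] (μ : Measure X)
    (g : X → EReal) : EReal :=
  ((∫⁻ x, epos (g x) ∂μ : ℝ≥0∞) : EReal) - ((∫⁻ x, epos (-(g x)) ∂μ : ℝ≥0∞) : EReal)

/-!
Fix `p` with `∫ log f_p < -N p` and an integrable majorant `g ≥ log f_p` with the same property.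
Cutting `{0, …, n - 1}` into blocks of length `p` in each of the `p` possible phases and taking the
geometric mean of the resulting bounds gives `log f_n ≤ (1/p) ∑_{k < L} g ∘ T^k + O(1)` with
`L = n - O(1)`, uniformly in the point. At `T^m x` this Birkhoff sum is the difference of the sums
of lengths `m + L` and `m` at `x`, so Birkhoff's theorem at the single point `x` controls it for
all `m`, with error `o(n + m)`.
-/

open scoped NNReal

/-- The maximum of the Birkhoff sums of lengths `0, …, n`, as in the maximal ergodic theorem. The
empty sum is included, so the maximum is nonnegative. -/
noncomputable def maxBirkhoffSum {X : Type*} (T : X → X) (h : X → ℝ) (n : ℕ) (x : X) : ℝ :=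
  partialSups (fun k => birkhoffSum T h k x) n

section Birkhoff

variable {X : Type*} {T : X → X} {h : X → ℝ}

lemma maxBirkhoffSum_zero : maxBirkhoffSum T h 0 = 0 := by
  ext x
  simp [maxBirkhoffSum]

lemma maxBirkhoffSum_nonneg (n : ℕ) (x : X) : 0 ≤ maxBirkhoffSum T h n x :=
  le_partialSups_of_le (fun k => birkhoffSum T h k x) n.zero_le

lemma maxBirkhoffSum_succ (n : ℕ) (x : X) :
    maxBirkhoffSum T h (n + 1) x = max 0 (h x + maxBirkhoffSum T h n (T x)) := by
  rw [maxBirkhoffSum, ← Order.succ_eq_add_one, partialSups_succ']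
  congr 1
  simp only [Function.comp_def, Order.succ_eq_add_one, birkhoffSum_succ']
  exact map_partialSups (OrderIso.addLeft (h x)) (fun k => birkhoffSum T h k (T x)) n

lemma bddAbove_birkhoffSum_apply_iff (x : X) :
    BddAbove (Set.range fun n => birkhoffSum T h n (T x)) ↔
      BddAbove (Set.range fun n => birkhoffSum T h n x) := by
  constructor
  · rintro ⟨b, hb⟩
    refine ⟨max 0 (h x + b), Set.forall_mem_range.2 fun n => ?_⟩
    cases n with
    | zero => exact le_max_left _ _
    | succ n =>
      rw [birkhoffSum_succ']
      exact le_max_of_le_right (by gcongr; exact hb ⟨n, rfl⟩)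
  · rintro ⟨b, hb⟩
    refine ⟨b - h x, Set.forall_mem_range.2 fun n => le_sub_iff_add_le'.2 ?_⟩
    rw [← birkhoffSum_succ']
    exact hb ⟨n + 1, rfl⟩

variable [MeasurableSpace X] {μ : Measure X}

lemma integrable_maxBirkhoffSum (hT : MeasurePreserving T μ μ) (hh : Integrable h μ) (n : ℕ) :
    Integrable (maxBirkhoffSum T h n) μ := by
  induction n with
  | zero => exact maxBirkhoffSum_zero (T := T) (h := h) ▸ integrable_zero _ _ _
  | succ n ih =>
    simp only [funext (maxBirkhoffSum_succ (T := T) (h := h) n)]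
    exact (integrable_zero X ℝ μ).sup (hh.add (hT.integrable_comp_of_integrable ih))

/-- The integrand is `maxBirkhoffSum T h (n + 1) - maxBirkhoffSum T h n ∘ T`, and composing with
`T` does not change the integral. -/
lemma integral_max_neg_maxBirkhoffSum_nonneg (hT : MeasurePreserving T μ μ)
    (hh : Integrable h μ) (n : ℕ) :
    0 ≤ ∫ x, max (h x) (-maxBirkhoffSum T h n (T x)) ∂μ := by
  have hM := integrable_maxBirkhoffSum hT hh
  have hMT : Integrable (fun x => maxBirkhoffSum T h n (T x)) μ :=
    hT.integrable_comp_of_integrable (hM n)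
  have hcomp : ∫ x, maxBirkhoffSum T h n (T x) ∂μ = ∫ x, maxBirkhoffSum T h n x ∂μ := by
    rw [← integral_map hT.aemeasurable (by rw [hT.map_eq]; exact (hM n).1), hT.map_eq]
  have hdiff : ∀ x, max (h x) (-maxBirkhoffSum T h n (T x)) =
      maxBirkhoffSum T h (n + 1) x - maxBirkhoffSum T h n (T x) := fun x => by
    rw [maxBirkhoffSum_succ, ← max_sub_sub_right, max_comm, add_sub_cancel_right, zero_sub]
  simp_rw [hdiff]
  rw [integral_sub (hM _) hMT, hcomp, sub_nonneg]
  exact integral_mono (hM _) (hM _) fun x => (partialSups _).monotone n.le_succ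

lemma tendsto_integral_max_neg_maxBirkhoffSum (hT : MeasurePreserving T μ μ)
    (hh : Integrable h μ)
    (hunbdd : ∀ᵐ x ∂μ, ¬ BddAbove (Set.range fun n => birkhoffSum T h n x)) :
    Tendsto (fun n => ∫ x, max (h x) (-maxBirkhoffSum T h n (T x)) ∂μ) atTop
      (nhds (∫ x, h x ∂μ)) := by
  refine tendsto_integral_of_dominated_convergence (fun x => |h x|) (fun n => ?_) hh.abs
    (fun n => ae_of_all _ fun x => ?_) ?_
  · exact (hh.sup (hT.integrable_comp_of_integrable (integrable_maxBirkhoffSum hT hh n)).neg).1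
  · rw [Real.norm_eq_abs, abs_le]
    exact ⟨(neg_abs_le _).trans (le_max_left _ _), max_le (le_abs_self _)
      ((neg_nonpos.2 (maxBirkhoffSum_nonneg n _)).trans (abs_nonneg _))⟩
  · filter_upwards [hunbdd] with x hx
    have htop : Tendsto (fun n => maxBirkhoffSum T h n (T x)) atTop atTop :=
      tendsto_atTop_atTop_of_monotone' (partialSups _).monotone fun hbdd =>
        hx ((bddAbove_birkhoffSum_apply_iff x).1 (bddAbove_range_partialSups.1 hbdd))
    refine tendsto_const_nhds.congr' ?_
    filter_upwards [htop.eventually_ge_atTop (-h x)] with n hn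
    exact (max_eq_left (neg_le.1 hn)).symm

lemma nullMeasurableSet_bddAbove_range {ι : Type*} [Countable ι] {u : ι → X → ℝ}
    (hu : ∀ i, AEMeasurable (u i) μ) :
    NullMeasurableSet {x | BddAbove (Set.range fun i => u i x)} μ := by
  refine (measurableSet_bddAbove_range fun i => (hu i).measurable_mk).nullMeasurableSet.congr ?_
  filter_upwards [ae_all_iff.2 fun i => (hu i).ae_eq_mk] with x hx
  change BddAbove _ = BddAbove _
  simp only [hx]

lemma ae_bddAbove_birkhoffSum_of_integral_neg (hT : Ergodic T μ) (hh : Integrable h μ)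
    (hneg : ∫ x, h x ∂μ < 0) :
    ∀ᵐ x ∂μ, BddAbove (Set.range fun n => birkhoffSum T h n x) := by
  have hTm := hT.toMeasurePreserving
  have hsum : ∀ n, AEMeasurable (birkhoffSum T h n) μ := fun n =>
    Finset.aemeasurable_fun_sum _ fun k _ =>
      (hTm.iterate k).integrable_comp_of_integrable hh |>.aemeasurable
  refine (hT.quasiErgodic.ae_mem_or_ae_notMem₀ (nullMeasurableSet_bddAbove_range hsum)
    (Eq.eventuallyEq (Set.ext bddAbove_birkhoffSum_apply_iff))).resolve_right fun hunbdd => ?_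
  exact hneg.not_ge <| ge_of_tendsto' (tendsto_integral_max_neg_maxBirkhoffSum hTm hh hunbdd)
    (integral_max_neg_maxBirkhoffSum_nonneg hTm hh)

variable [IsProbabilityMeasure μ]

lemma ae_exists_birkhoffSum_le (hT : Ergodic T μ) (hh : Integrable h μ) {δ : ℝ} (hδ : 0 < δ) :
    ∀ᵐ x ∂μ, ∃ D : ℝ, ∀ n : ℕ, birkhoffSum T h n x ≤ n * (∫ x, h x ∂μ + δ) + D := by
  set c := ∫ x, h x ∂μ + δ with hc
  have hneg : ∫ x, (h x - c) ∂μ < 0 := by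
    rw [integral_sub hh (integrable_const c)]
    simp [hc, hδ]
  filter_upwards [ae_bddAbove_birkhoffSum_of_integral_neg hT (hh.sub (integrable_const c)) hneg]
    with x ⟨D, hD⟩
  refine ⟨D, fun n => ?_⟩
  have hn : birkhoffSum T h n x - n * c ≤ D := by
    simpa [birkhoffSum, Finset.sum_sub_distrib] using hD ⟨n, rfl⟩
  linarith

lemma ae_exists_abs_birkhoffSum_sub_le (hT : Ergodic T μ) (hh : Integrable h μ) {δ : ℝ}
    (hδ : 0 < δ) :
    ∀ᵐ x ∂μ, ∃ D : ℝ, ∀ n : ℕ, |birkhoffSum T h n x - n * ∫ x, h x ∂μ| ≤ n * δ + D := by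
  filter_upwards [ae_exists_birkhoffSum_le hT hh hδ, ae_exists_birkhoffSum_le hT hh.neg hδ]
    with x ⟨D, hD⟩ ⟨E, hE⟩
  refine ⟨max D E, fun n => abs_le.2 ⟨?_, ?_⟩⟩
  · have hlower := hE n
    simp only [birkhoffSum, Pi.neg_apply, Finset.sum_neg_distrib, integral_neg] at hlower ⊢
    linarith [le_max_right D E]
  · linarith [hD n, le_max_left D E]

lemma ae_exists_birkhoffSum_iterate_le (hT : Ergodic T μ) (hh : Integrable h μ) {δ : ℝ}
    (hδ : 0 < δ) :
    ∀ᵐ x ∂μ, ∃ D : ℝ, ∀ m n : ℕ,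
      birkhoffSum T h n (T^[m] x) ≤ n * ∫ x, h x ∂μ + (n + m) * δ + D := by
  filter_upwards [ae_exists_abs_birkhoffSum_sub_le hT hh (half_pos hδ)] with x ⟨D, hD⟩
  refine ⟨2 * D, fun m n => ?_⟩
  have hsum := birkhoffSum_add T h m n x
  have hupper := (abs_le.1 (hD (m + n))).2
  have hlower := (abs_le.1 (hD m)).1
  have hnδ : 0 ≤ n * δ := by positivity
  push_cast at hupper
  linarith

end Birkhoff

section ExtendedReal

lemma elog_le_coe_iff {x r : ℝ} : elog x ≤ (r : EReal) ↔ x ≤ Real.exp r := by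
  rw [elog, ENNReal.log_ofReal]
  split_ifs with hx
  · simpa using hx.trans (Real.exp_pos r).le
  · rw [EReal.coe_le_coe_iff, Real.log_le_iff_le_exp (not_le.1 hx)]

lemma measurable_elog : Measurable elog :=
  ENNReal.measurable_log.comp ENNReal.measurable_ofReal

lemma measurable_epos : Measurable epos :=
  Measurable.ite (measurableSet_singleton ⊤) measurable_const
    (ENNReal.measurable_ofReal.comp measurable_ereal_toReal)

lemma epos_coe (r : ℝ) : epos r = ENNReal.ofReal r := by
  simp [epos]

lemma epos_le_of_le {e : EReal} {c : ℝ} (he : e ≤ c) : epos e ≤ ENNReal.ofReal c := by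
  induction e with
  | bot => simp [epos]
  | top => simp at he
  | coe r => exact epos_coe r ▸ ENNReal.ofReal_le_ofReal (EReal.coe_le_coe_iff.1 he)

lemma le_toReal_epos_sub_of_le_epos_neg {e : EReal} (he : e ≠ ⊤) {t : ℝ≥0}
    (ht : t ≤ epos (-e)) : e ≤ (((epos e).toReal - t : ℝ) : EReal) := by
  induction e with
  | bot => exact bot_le
  | top => exact absurd rfl he
  | coe r =>
    rw [← EReal.coe_neg, epos_coe, ← ENNReal.ofReal_coe_nnreal,
      ENNReal.ofReal_le_ofReal_iff'] at ht
    rw [EReal.coe_le_coe_iff, epos_coe, ENNReal.toReal_ofReal']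
    have htr : (t : ℝ) ≤ max r 0 - r := by
      rcases ht with ht | ht
      · linarith [le_max_right r 0]
      · linarith [le_max_left r 0]
    linarith

variable {X : Type*} [MeasurableSpace X] {μ : Measure X} [IsFiniteMeasure μ]

lemma exists_simpleFunc_le_lt_integral {φ : X → ℝ≥0∞} {r : ℝ}
    (hr : (r : EReal) < (∫⁻ x, φ x ∂μ : ℝ≥0∞)) :
    ∃ ψ : SimpleFunc X ℝ≥0, (∀ x, ψ x ≤ φ x) ∧ r < ∫ x, (ψ x : ℝ) ∂μ := by
  rcases lt_or_ge r 0 with hr0 | hr0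
  · exact ⟨0, fun x => by simp, by simpa using hr0⟩
  have hlt : ENNReal.ofReal r < ∫⁻ x, φ x ∂μ := by
    rwa [← EReal.coe_ennreal_lt_coe_ennreal_iff, EReal.coe_ennreal_ofReal, max_eq_left hr0]
  rw [lintegral_eq_nnreal] at hlt
  obtain ⟨ψ, hψφ, hψ⟩ : ∃ ψ : SimpleFunc X ℝ≥0, (∀ x, ψ x ≤ φ x) ∧
      ENNReal.ofReal r < ∫⁻ x, ψ x ∂μ := by
    simpa only [lt_iSup_iff, exists_prop, ← SimpleFunc.lintegral_eq_lintegral,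
      SimpleFunc.coe_map, Function.comp_apply] using hlt
  have hψi : Integrable (fun x => (ψ x : ℝ)) μ :=
    (ψ.map ((↑) : ℝ≥0 → ℝ)).integrable_of_isFiniteMeasure
  refine ⟨ψ, hψφ, ?_⟩
  rw [lintegral_coe_eq_integral _ hψi] at hψ
  exact (ENNReal.ofReal_lt_ofReal_iff_of_nonneg hr0).1 hψ

lemma lintegral_epos_ne_top_of_le {u : X → EReal} {c : ℝ} (hc : ∀ x, u x ≤ c) :
    ∫⁻ x, epos (u x) ∂μ ≠ ⊤ :=
  ((lintegral_mono fun x => epos_le_of_le (hc x)).trans_lt <| by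
    simpa using ENNReal.mul_lt_top ENNReal.ofReal_lt_top (measure_lt_top μ _)).ne

/-- The negative part of `u`, whose integral may be infinite, is replaced by a simple function
below it. -/
lemma exists_integrable_ge_of_eintegral_lt {u : X → EReal} (hu : AEMeasurable u μ)
    (hutop : ∀ x, u x ≠ ⊤) (hupos : ∫⁻ x, epos (u x) ∂μ ≠ ⊤) {b : ℝ}
    (hb : eintegral μ u < b) :
    ∃ g : X → ℝ, Integrable g μ ∧ (∀ x, u x ≤ g x) ∧ ∫ x, g x ∂μ < b := by
  have hmeas : AEMeasurable (fun x => epos (u x)) μ := measurable_epos.comp_aemeasurable hu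
  have hneg : ((∫⁻ x, epos (u x) ∂μ).toReal - b : ℝ) < (∫⁻ x, epos (-u x) ∂μ : EReal) := by
    rw [EReal.coe_sub, EReal.coe_ennreal_toReal hupos]
    refine EReal.sub_lt_of_lt_add' ((EReal.sub_lt_iff (.inl ?_) (.inr ?_)).1 hb)
    · exact EReal.coe_ennreal_ne_bot _
    · exact mt EReal.coe_ennreal_eq_top_iff.1 hupos
  obtain ⟨ψ, hψu, hψ⟩ := exists_simpleFunc_le_lt_integral hneg
  have hposi := integrable_toReal_of_lintegral_ne_top hmeas hupos
  have hψi : Integrable (fun x => (ψ x : ℝ)) μ :=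
    (ψ.map ((↑) : ℝ≥0 → ℝ)).integrable_of_isFiniteMeasure
  refine ⟨fun x => (epos (u x)).toReal - ψ x, hposi.sub hψi,
    fun x => le_toReal_epos_sub_of_le_epos_neg (hutop x) (hψu x), ?_⟩
  rw [integral_sub hposi hψi, integral_toReal hmeas (ae_lt_top' hmeas hupos)]
  linarith

lemma exists_integrable_le_exp_of_eintegral_elog_lt {f : X → ℝ} (hf : AEMeasurable f μ) {c b : ℝ}
    (hc : ∀ x, f x ≤ Real.exp c) (hb : eintegral μ (fun x => elog (f x)) < b) :
    ∃ g : X → ℝ, Integrable g μ ∧ (∀ x, f x ≤ Real.exp (g x)) ∧ ∫ x, g x ∂μ < b := by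
  have hbound : ∀ x, elog (f x) ≤ c := fun x => elog_le_coe_iff.2 (hc x)
  obtain ⟨g, hgi, hfg, hgb⟩ := exists_integrable_ge_of_eintegral_lt
    (measurable_elog.comp_aemeasurable hf)
    (fun x => ((hbound x).trans_lt (EReal.coe_lt_top c)).ne)
    (lintegral_epos_ne_top_of_le hbound) hb
  exact ⟨g, hgi, fun x => elog_le_coe_iff.1 (hfg x), hgb⟩

end ExtendedReal

/-- A nonnegative submultiplicative cocycle over `T`: the exponential of a subadditive process,
with the value `0` allowed so that the logarithm may be `-∞`. The bound at time `0` accounts for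
the empty product in block decompositions. -/
structure IsSubmultiplicativeCocycle {X : Type*} (T : X → X) (F : ℕ → X → ℝ) : Prop where
  nonneg : ∀ n x, 0 ≤ F n x
  map_zero_le_one : ∀ x, F 0 x ≤ 1
  add_le_mul : ∀ m n x, F (n + m) x ≤ F m x * F n (T^[m] x)

lemma sum_birkhoffSum_iterate {X M : Type*} [AddCommMonoid M] (T : X → X) (g : X → M) (p q : ℕ)
    (x : X) :
    ∑ j ∈ Finset.range p, birkhoffSum T^[p] g q (T^[j] x) = birkhoffSum T g (q * p) x := by
  induction q generalizing x with
  | zero => simp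
  | succ q ih =>
    have hcomm : ∀ j, T^[p] (T^[j] x) = T^[j] (T^[p] x) := fun j =>
      Function.Commute.iterate_iterate_self T p j x
    simp_rw [birkhoffSum_succ', hcomm, Finset.sum_add_distrib, ih]
    rw [Nat.succ_mul, add_comm (q * p) p, birkhoffSum_add]
    rfl

namespace IsSubmultiplicativeCocycle

variable {X : Type*} {T : X → X} {F : ℕ → X → ℝ} {K : ℝ} {p : ℕ} {g : X → ℝ}

/-- Here `f 0` is arbitrary, so it is replaced by the empty product `1`. -/
lemma update_zero_one {f : ℕ → X → ℝ} (hnonneg : ∀ n x, 0 ≤ f n x)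
    (hsub : ∀ m n : ℕ, 1 ≤ m → 1 ≤ n → ∀ x, f (n + m) x ≤ f m x * f n (T^[m] x)) :
    IsSubmultiplicativeCocycle T (Function.update f 0 1) where
  nonneg n x := by
    rcases n.eq_zero_or_pos with rfl | hn
    · simp
    · simpa [hn.ne'] using hnonneg n x
  map_zero_le_one x := by simp
  add_le_mul m n x := by
    rcases m.eq_zero_or_pos with rfl | hm
    · simp
    rcases n.eq_zero_or_pos with rfl | hn
    · simp
    simpa [hm.ne', hn.ne'] using hsub m n hm hn x

lemma le_exp_birkhoffSum_iterate (hF : IsSubmultiplicativeCocycle T F)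
    (hg : ∀ x, F p x ≤ Real.exp (g x)) (q : ℕ) (x : X) :
    F (q * p) x ≤ Real.exp (birkhoffSum T^[p] g q x) := by
  induction q generalizing x with
  | zero => simpa using hF.map_zero_le_one x
  | succ q ih =>
    rw [birkhoffSum_succ', Real.exp_add, Nat.succ_mul]
    exact (hF.add_le_mul p (q * p) x).trans
      (mul_le_mul (hg x) (ih _) (hF.nonneg _ _) (Real.exp_pos _).le)

lemma le_exp_mul (hF : IsSubmultiplicativeCocycle T F) (hK : ∀ x, F 1 x ≤ Real.exp K)
    (n : ℕ) (x : X) : F n x ≤ Real.exp (n * K) := by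
  simpa [birkhoffSum] using hF.le_exp_birkhoffSum_iterate (g := fun _ => K) hK n x

lemma le_exp_birkhoffSum_iterate_shift (hF : IsSubmultiplicativeCocycle T F)
    (hK : ∀ x, F 1 x ≤ Real.exp K) (hg : ∀ x, F p x ≤ Real.exp (g x))
    (q : ℕ) {r j : ℕ} (hjr : j ≤ r) (x : X) :
    F (q * p + r) x ≤ Real.exp (birkhoffSum T^[p] g q (T^[j] x) + r * K) := by
  obtain ⟨i, rfl⟩ := Nat.exists_eq_add_of_le' hjr
  calc F (q * p + (i + j)) x = F (i + q * p + j) x := by congr 1; ring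
    _ ≤ F j x * (F (q * p) (T^[j] x) * F i (T^[q * p] (T^[j] x))) :=
      (hF.add_le_mul _ _ _).trans
        (mul_le_mul_of_nonneg_left (hF.add_le_mul _ _ _) (hF.nonneg _ _))
    _ ≤ Real.exp (j * K) *
        (Real.exp (birkhoffSum T^[p] g q (T^[j] x)) * Real.exp (i * K)) := by
      have hnonneg := hF.nonneg
      gcongr
      · exact mul_nonneg (hnonneg _ _) (hnonneg _ _)
      · exact hF.le_exp_mul hK _ _
      · exact hnonneg _ _
      · exact hF.le_exp_birkhoffSum_iterate hg _ _
      · exact hF.le_exp_mul hK _ _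
    _ = Real.exp (birkhoffSum T^[p] g q (T^[j] x) + (i + j : ℕ) * K) := by
      rw [← Real.exp_add, ← Real.exp_add]
      push_cast
      ring_nf

/-- The geometric mean of `le_exp_birkhoffSum_iterate_shift` over the phases `j < p`. -/
lemma le_exp_birkhoffSum_div (hF : IsSubmultiplicativeCocycle T F)
    (hK : ∀ x, F 1 x ≤ Real.exp K) (hg : ∀ x, F p x ≤ Real.exp (g x))
    (hp : p ≠ 0) (q : ℕ) {r : ℕ} (hpr : p ≤ r) (x : X) :
    F (q * p + r) x ≤ Real.exp (birkhoffSum T g (q * p) x / p + r * K) := by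
  have hprod := Finset.prod_le_prod (fun _ _ => hF.nonneg (q * p + r) x) fun j hj =>
    hF.le_exp_birkhoffSum_iterate_shift hK hg q ((Finset.mem_range.1 hj).le.trans hpr) x
  rw [Finset.prod_const, Finset.card_range, ← Real.exp_sum, Finset.sum_add_distrib,
    sum_birkhoffSum_iterate, Finset.sum_const, Finset.card_range, nsmul_eq_mul] at hprod
  refine le_of_pow_le_pow_left₀ hp (Real.exp_pos _).le (hprod.trans_eq ?_)
  rw [← Real.exp_nat_mul]
  field_simp

lemma ae_exists_le_exp [MeasurableSpace X] {μ : Measure X} [IsProbabilityMeasure μ]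
    (hF : IsSubmultiplicativeCocycle T F)
    (hK : ∀ x, F 1 x ≤ Real.exp K) (hg : ∀ x, F p x ≤ Real.exp (g x))
    (hT : Ergodic T μ) (hp : p ≠ 0) (hgi : Integrable g μ) {δ : ℝ} (hδ : 0 < δ) :
    ∀ᵐ x ∂μ, ∃ D : ℝ, ∀ m n : ℕ, p ≤ n →
      F n (T^[m] x) ≤ Real.exp (n * ((∫ x, g x ∂μ) / p) + (n + m) * δ + D) := by
  set a := (∫ x, g x ∂μ) / p with ha
  have hp0 : (0 : ℝ) < p := by positivity
  filter_upwards [ae_exists_birkhoffSum_iterate_le hT hgi (mul_pos hp0 hδ)] with x ⟨D, hD⟩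
  refine ⟨D / p + 2 * p * (|a| + |K|), fun m n hpn => ?_⟩
  obtain ⟨q, r, rfl, hpr, hrp⟩ : ∃ q r, n = q * p + r ∧ p ≤ r ∧ r ≤ 2 * p :=
    ⟨(n - p) / p, p + (n - p) % p, by have := Nat.div_add_mod' (n - p) p; lia, by lia,
      by have := Nat.mod_lt (n - p) hp.bot_lt; lia⟩
  refine (hF.le_exp_birkhoffSum_div hK hg hp q hpr _).trans (Real.exp_le_exp.2 ?_)
  have hr : (r : ℝ) ≤ 2 * p := by exact_mod_cast hrp
  have hsum : birkhoffSum T g (q * p) (T^[m] x) / p ≤ q * p * a + (q * p + m) * δ + D / p := by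
    have hdiv := div_le_div_of_nonneg_right (hD m (q * p)) hp0.le
    refine hdiv.trans_eq ?_
    push_cast
    rw [ha]
    field_simp
  have hra : r * -a ≤ 2 * p * |a| := by
    grw [neg_le_abs a, hr]
  have hrK : r * K ≤ 2 * p * |K| := by
    grw [le_abs_self K, hr]
  have hrδ : 0 ≤ r * δ := by positivity
  push_cast
  linarith

end IsSubmultiplicativeCocycle

lemma exists_ne_zero_lt_mul_of_tendsto_inv_mul_bot {a : ℕ → EReal}
    (ha : Tendsto (fun n : ℕ => (((n : ℝ)⁻¹ : ℝ) : EReal) * a n) atTop (nhds ⊥)) (c : ℝ) :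
    ∃ p : ℕ, p ≠ 0 ∧ a p < ((c * p : ℝ) : EReal) := by
  obtain ⟨p, hlt, hp⟩ :=
    ((ha.eventually_lt_const (EReal.bot_lt_coe c)).and (eventually_ne_atTop 0)).exists
  refine ⟨p, hp, ?_⟩
  by_contra! hle
  refine hlt.not_ge ?_
  calc (c : EReal) = (((p : ℝ)⁻¹ : ℝ) : EReal) * ((c * p : ℝ) : EReal) := by
        rw [← EReal.coe_mul]
        congr 1
        field_simp
    _ ≤ (((p : ℝ)⁻¹ : ℝ) : EReal) * a p :=
        mul_le_mul_of_nonneg_left hle (by exact_mod_cast inv_nonneg.2 p.cast_nonneg)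

/-- Proposition 2.3(ii): if `α = lim (1/n) ∫ log f_n dμ = -∞` for a subadditive
sequence of nonnegative functions over an ergodic system, then for every `ε > 0`,
`N > 0` and a.e. `x` there is `n₀(x)` with `log f_n(T^m x) ≤ -N n + (n+m) ε`
for all `n ≥ n₀` and all `m`. -/
theorem subadditive_ergodic_uniform_control_bot {X : Type*} [MeasurableSpace X]
    (μ : Measure X) [IsProbabilityMeasure μ]
    (T : X → X) (hT : Ergodic T μ) (f : ℕ → X → ℝ)
    (hmeas : ∀ n, Measurable (f n)) (hnonneg : ∀ n x, 0 ≤ f n x)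
    (C : ℝ) (hC : ∀ x, f 1 x ≤ C)
    (hsub : ∀ m n : ℕ, 1 ≤ m → 1 ≤ n → ∀ x, f (n + m) x ≤ f m x * f n (T^[m] x))
    (hα : Tendsto (fun n : ℕ => (((n : ℝ)⁻¹ : ℝ) : EReal) *
        eintegral μ (fun x => elog (f n x))) atTop (nhds (⊥ : EReal)))
    (ε : ℝ) (hε : 0 < ε) (N : ℝ) (hN : 0 < N) :
    ∀ᵐ x ∂μ, ∃ n₀ : ℕ, 1 ≤ n₀ ∧ ∀ n : ℕ, n₀ ≤ n → ∀ m : ℕ, 1 ≤ m →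
      elog (f n (T^[m] x)) ≤ ((-(N * n) + ((n + m : ℕ) : ℝ) * ε : ℝ) : EReal) := by
  obtain ⟨p, hp, hpα⟩ := exists_ne_zero_lt_mul_of_tendsto_inv_mul_bot hα (-N)
  have hF := IsSubmultiplicativeCocycle.update_zero_one hnonneg hsub
  have hK : ∀ x, Function.update f 0 1 1 x ≤ Real.exp (Real.log (max C 1)) := fun x => by
    rw [Real.exp_log (by positivity)]
    exact le_max_of_le_left (hC x)
  have hFf : ∀ {n}, n ≠ 0 → Function.update f 0 1 n = f n := fun hn => Function.update_of_ne hn _ _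
  obtain ⟨g, hgi, hfg, hgint⟩ := exists_integrable_le_exp_of_eintegral_elog_lt
    (hmeas p).aemeasurable (fun x => hFf hp ▸ hF.le_exp_mul hK p x) hpα
  filter_upwards [hF.ae_exists_le_exp hK (hFf hp ▸ hfg) hT hp hgi (half_pos hε)] with x ⟨D, hD⟩
  obtain ⟨n₁, hn₁⟩ := exists_nat_ge (D / (ε / 2))
  refine ⟨max n₁ p, by lia, fun n hn m _ => elog_le_coe_iff.2 ?_⟩
  have hDn : D ≤ n * (ε / 2) := (div_le_iff₀ (half_pos hε)).1
    (hn₁.trans (by exact_mod_cast (le_max_left _ _).trans hn))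
  have hmean : (∫ x, g x ∂μ) / p ≤ -N := (div_le_iff₀ (by positivity)).2 hgint.le
  rw [← hFf (n := n) (by lia)]
  refine (hD m n (by lia)).trans (Real.exp_le_exp.2 ?_)
  have hnmean := mul_le_mul_of_nonneg_left hmean n.cast_nonneg
  have hmε : 0 ≤ m * (ε / 2) := by positivity
  push_cast
  linarith
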